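/- arXiv:2010.08258 — 2 statements merged into one kernel-verified Lean document; each statement's English description precedes it below -/
import Mathlib

section
/- Let p and q be continuously differentiable, strictly positive probability densities on ℝⁿ, and let g: ℝⁿ → ℝⁿ be continuously differentiable with q(x)·g(x) → 0 as ‖x‖ → ∞ and ∇·(q g) Lebesgue-integrable on ℝⁿ. If ∫ q‖g‖₂² < ∞ and F(q‖p) := ∫ q(x)‖∇ log q(x) − ∇ log p(x)‖₂² dx < ∞, then |E_{q(x)}[(S_p g)(x)]| ≤ √(∫ q(x)‖g(x)‖₂² dx) · √(F(q‖p)). -/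
/-!
The product rule for `∇·(q g)`, together with `q ∇ log q = ∇q`, gives the pointwise identity
`q (S_p g) = ∇·(q g) - q ⟪g, ∇ log q - ∇ log p⟫`. The first term on the right has integral zero and
Cauchy–Schwarz for the weight `q` bounds the integral of the second.

That `∫ ∇·F = 0` for an integrable `C¹` field `F` with integrable divergence needs a cutoff, since
the individual partial derivatives of `F` may fail to be integrable. For a bump function `b` equal
to `1` near the origin, the divergence theorem for the compactly supported field `x ↦ b (r x) F x`
reads `∫ b (r x) ∇·F = -r ∫ Db (r x) (F x)`. As `r → 0` the left side tends to `∫ ∇·F`, and the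
right side to `0` because `F` is integrable; for `F = q g` this follows from `∫ q < ∞` and
`∫ q ‖g‖² < ∞`.
-/

open MeasureTheory Filter Topology
open scoped RealInnerProductSpace

/-- The divergence `∇·f` of a vector field `f : ℝⁿ → ℝⁿ`, i.e. the trace of its Jacobian. -/
noncomputable def vdiv {n : ℕ} (f : EuclideanSpace ℝ (Fin n) → EuclideanSpace ℝ (Fin n))
    (x : EuclideanSpace ℝ (Fin n)) : ℝ :=
  LinearMap.trace ℝ (EuclideanSpace ℝ (Fin n)) (fderiv ℝ f x).toLinearMap

/-- The Stein operator `(S_p g)(x) = ⟨∇ log p(x), g(x)⟩ + tr(Dg(x))`. -/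
noncomputable def steinOp {n : ℕ} (p : EuclideanSpace ℝ (Fin n) → ℝ)
    (g : EuclideanSpace ℝ (Fin n) → EuclideanSpace ℝ (Fin n))
    (x : EuclideanSpace ℝ (Fin n)) : ℝ :=
  ⟪gradient (fun y => Real.log (p y)) x, g x⟫ + vdiv g x

/-- The trace as a continuous linear functional on the endomorphisms of a finite-dimensional
normed space, which makes it commute with Bochner integrals. -/
noncomputable def traceCLM (E : Type*) [NormedAddCommGroup E] [NormedSpace ℝ E]
    [FiniteDimensional ℝ E] : (E →L[ℝ] E) →L[ℝ] ℝ :=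
  (LinearMap.trace ℝ E ∘ₗ ContinuousLinearMap.coeLM ℝ).toContinuousLinearMap

/-- The divergence of a vector field on a finite-dimensional normed space, as the trace of its
derivative. It extends `vdiv` to spaces without coordinates and agrees with it definitionally. -/
noncomputable def divergence {E : Type*} [NormedAddCommGroup E] [NormedSpace ℝ E]
    [FiniteDimensional ℝ E] (F : E → E) (x : E) : ℝ :=
  traceCLM E (fderiv ℝ F x)

/-- The score `∇ log q` of a density `q`. Where `q` vanishes its value is junk (`Real.log 0 = 0`),
so it is only meaningful when weighted by `q`. -/
noncomputable def score {E : Type*} [NormedAddCommGroup E] [InnerProductSpace ℝ E]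
    [CompleteSpace E] (q : E → ℝ) : E → E :=
  gradient fun y => Real.log (q y)

/-- The Stein operator `⟪s, g⟫ + ∇·g` of an arbitrary drift `s`, not necessarily a gradient;
`steinOp p` is the case where `s` is the score of `p`. -/
noncomputable def driftSteinOp {E : Type*} [NormedAddCommGroup E] [InnerProductSpace ℝ E]
    [FiniteDimensional ℝ E] (s g : E → E) (x : E) : ℝ :=
  ⟪s x, g x⟫ + divergence g x

section Cutoff

variable {E G H : Type*} [NormedAddCommGroup E] [NormedSpace ℝ E] [SecondCountableTopology E]
  [MeasurableSpace E] [OpensMeasurableSpace E] {μ : Measure E}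
  [NormedAddCommGroup G] [NormedSpace ℝ G] [NormedAddCommGroup H] [NormedSpace ℝ H]

theorem tendsto_integral_apply_smul {φ : E → G →L[ℝ] H} (hφ : Continuous φ) {C : ℝ}
    (hC : ∀ x, ‖φ x‖ ≤ C) {f : E → G} (hf : Integrable f μ) :
    Tendsto (fun r : ℝ => ∫ x, φ (r • x) (f x) ∂μ) (𝓝 0) (𝓝 (∫ x, φ 0 (f x) ∂μ)) := by
  refine tendsto_integral_filter_of_dominated_convergence (fun x => C * ‖f x‖)
    (.of_forall fun r => ?_) (.of_forall fun r => ae_of_all _ fun x => ?_) (hf.norm.const_mul C)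
    (ae_of_all _ fun x => ?_)
  · exact (ContinuousLinearMap.id ℝ (G →L[ℝ] H)).aestronglyMeasurable_comp₂
      (hφ.comp (continuous_const_smul r)).aestronglyMeasurable hf.aestronglyMeasurable
  · exact (φ (r • x)).le_of_opNorm_le (hC _) (f x)
  · have : Continuous fun r : ℝ => φ (r • x) (f x) := by fun_prop
    simpa using this.tendsto 0

end Cutoff

section Divergence

variable {E : Type*} [NormedAddCommGroup E] [NormedSpace ℝ E] [FiniteDimensional ℝ E]

theorem continuous_divergence {F : E → E} (hF : ContDiff ℝ 1 F) : Continuous (divergence F) :=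
  (traceCLM E).continuous.comp (hF.continuous_fderiv one_ne_zero)

theorem traceCLM_smulRight (ℓ : E →L[ℝ] ℝ) (v : E) : traceCLM E (ℓ.smulRight v) = ℓ v :=
  LinearMap.trace_smulRight ℓ.toLinearMap v

theorem divergence_smul {c : E → ℝ} {F : E → E} {x : E} (hc : DifferentiableAt ℝ c x)
    (hF : DifferentiableAt ℝ F x) :
    divergence (fun y => c y • F y) x = c x * divergence F x + fderiv ℝ c x (F x) := by
  rw [divergence, fderiv_fun_smul hc hF, map_add, map_smul, traceCLM_smulRight, smul_eq_mul,
    divergence]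

variable [MeasurableSpace E] [BorelSpace E] {μ : Measure E} [μ.IsAddHaarMeasure]

theorem integral_fderiv_eq_zero {G : Type*} [NormedAddCommGroup G] [NormedSpace ℝ G]
    {f : E → G} (hf : Differentiable ℝ f) (hfi : Integrable f μ)
    (hf' : Integrable (fderiv ℝ f) μ) :
    ∫ x, fderiv ℝ f x ∂μ = 0 := by
  ext v
  have ibp := integral_smul_fderiv_eq_neg_fderiv_smul_of_integrable (𝕜 := ℝ) (μ := μ)
    (f := fun _ => 1) (g := f) (v := v) (by simp) (by simpa using hf'.apply_continuousLinearMap v)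
    (by simpa using hfi) (fun _ _ => differentiableAt_const 1) (fun x _ => hf x)
  rw [ContinuousLinearMap.integral_apply hf' v]
  simpa using ibp

theorem integral_divergence_eq_zero_of_integrable_fderiv {F : E → E} (hF : Differentiable ℝ F)
    (hFi : Integrable F μ) (hF' : Integrable (fderiv ℝ F) μ) :
    ∫ x, divergence F x ∂μ = 0 :=
  calc ∫ x, divergence F x ∂μ = traceCLM E (∫ x, fderiv ℝ F x ∂μ) :=
        (traceCLM E).integral_comp_comm hF'
    _ = 0 := by rw [integral_fderiv_eq_zero hF hFi hF', map_zero]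

theorem integral_mul_divergence_of_hasCompactSupport {c : E → ℝ} {F : E → E}
    (hc : ContDiff ℝ 1 c) (hcs : HasCompactSupport c) (hF : ContDiff ℝ 1 F) :
    ∫ x, c x * divergence F x ∂μ = -∫ x, fderiv ℝ c x (F x) ∂μ := by
  have hcF : ContDiff ℝ 1 fun x => c x • F x := hc.smul hF
  have hcFs : HasCompactSupport fun x => c x • F x := hcs.smul_right
  have total : ∫ x, divergence (fun y => c y • F y) x ∂μ = 0 :=
    integral_divergence_eq_zero_of_integrable_fderiv (hcF.differentiable one_ne_zero)
      (hcF.continuous.integrable_of_hasCompactSupport hcFs)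
      ((hcF.continuous_fderiv one_ne_zero).integrable_of_hasCompactSupport (hcFs.fderiv ℝ))
  have int_mul : Integrable (fun x => c x * divergence F x) μ :=
    (hc.continuous.mul (continuous_divergence hF)).integrable_of_hasCompactSupport hcs.mul_right
  have int_deriv : Integrable (fun x => fderiv ℝ c x (F x)) μ :=
    ((hc.continuous_fderiv one_ne_zero).clm_apply hF.continuous).integrable_of_hasCompactSupport
      ((hcs.fderiv ℝ).mono fun x hx h => hx (by simp [h]))
  simp_rw [divergence_smul (hc.differentiable one_ne_zero _) (hF.differentiable one_ne_zero _)]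
    at total
  rw [integral_add int_mul int_deriv] at total
  exact eq_neg_of_add_eq_zero_left total

theorem integral_divergence_eq_zero {F : E → E} (hF : ContDiff ℝ 1 F) (hFi : Integrable F μ)
    (hdiv : Integrable (divergence F) μ) :
    ∫ x, divergence F x ∂μ = 0 := by
  let b : ContDiffBump (0 : E) := ⟨1, 2, one_pos, one_lt_two⟩
  have hb : ContDiff ℝ 1 b := b.contDiff
  have hb' : Continuous (fderiv ℝ b) := hb.continuous_fderiv one_ne_zero
  obtain ⟨C, hC⟩ := hb'.bounded_above_of_compact_support (b.hasCompactSupport.fderiv ℝ)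
  have cutoff : ∀ᶠ r : ℝ in 𝓝[≠] 0,
      ∫ x, b (r • x) * divergence F x ∂μ = -(r * ∫ x, fderiv ℝ b (r • x) (F x) ∂μ) := by
    filter_upwards [self_mem_nhdsWithin] with r hr
    have ibp := integral_mul_divergence_of_hasCompactSupport (μ := μ) (c := fun x => b (r • x))
      (hb.comp (contDiff_const_smul r)) (b.hasCompactSupport.comp_smul hr) hF
    simpa [fderiv_comp_smul, integral_const_mul] using ibp
  have lhs_tendsto : Tendsto (fun r : ℝ => ∫ x, b (r • x) * divergence F x ∂μ) (𝓝 0)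
      (𝓝 (∫ x, divergence F x ∂μ)) := by
    have b_zero : b 0 = 1 := b.one_of_mem_closedBall (by simp [b])
    have norm_le (x : E) : ‖ContinuousLinearMap.lsmul ℝ ℝ (E := ℝ) (b x)‖ ≤ 1 :=
      (ContinuousLinearMap.opNorm_lsmul_apply_le _).trans
        ((Real.norm_of_nonneg b.nonneg).trans_le b.le_one)
    simpa [b_zero] using tendsto_integral_apply_smul
      ((ContinuousLinearMap.lsmul ℝ ℝ).continuous.comp hb.continuous) norm_le hdiv
  have rhs_tendsto :
      Tendsto (fun r : ℝ => -(r * ∫ x, fderiv ℝ b (r • x) (F x) ∂μ)) (𝓝 0) (𝓝 0) := by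
    simpa using (tendsto_id.mul (tendsto_integral_apply_smul hb' hC hFi)).neg
  exact tendsto_nhds_unique ((lhs_tendsto.mono_left nhdsWithin_le_nhds).congr' cutoff)
    (rhs_tendsto.mono_left nhdsWithin_le_nhds)

end Divergence

section WeightedCauchySchwarz

variable {α E : Type*} [MeasurableSpace α] {μ : Measure α} [NormedAddCommGroup E]
  [InnerProductSpace ℝ E] {q : α → ℝ} {u v : α → E}

theorem memLp_two_sqrt_smul (hq : AEStronglyMeasurable q μ) (hq0 : ∀ x, 0 ≤ q x)
    (hu : AEStronglyMeasurable u μ) (hu2 : Integrable (fun x => q x * ‖u x‖ ^ 2) μ) :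
    MemLp (fun x => √(q x) • u x) 2 μ := by
  refine (memLp_two_iff_integrable_sq_norm
    ((Real.continuous_sqrt.comp_aestronglyMeasurable hq).smul hu)).2 ?_
  simpa [norm_smul, mul_pow, hq0] using hu2

theorem integrable_smul_of_integrable_mul_norm_sq (hq : Integrable q μ) (hq0 : ∀ x, 0 ≤ q x)
    (hu : AEStronglyMeasurable u μ) (hu2 : Integrable (fun x => q x * ‖u x‖ ^ 2) μ) :
    Integrable (fun x => q x • u x) μ := by
  have sqrt_memLp : MemLp (fun x => √(q x)) 2 μ := by
    simpa using memLp_two_sqrt_smul (u := fun _ => (1 : ℝ)) hq.aestronglyMeasurable hq0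
      aestronglyMeasurable_const (by simpa using hq)
  have smul_memLp : MemLp (fun x => √(q x) • √(q x) • u x) 1 μ :=
    (memLp_two_sqrt_smul hq.aestronglyMeasurable hq0 hu hu2).smul sqrt_memLp
  simpa [smul_smul, Real.mul_self_sqrt, hq0] using memLp_one_iff_integrable.1 smul_memLp

theorem inner_toLp_two_ae_eq (hu : MemLp u 2 μ) (hv : MemLp v 2 μ) :
    (fun x => ⟪hu.toLp u x, hv.toLp v x⟫) =ᵐ[μ] fun x => ⟪u x, v x⟫ := by
  filter_upwards [hu.coeFn_toLp, hv.coeFn_toLp] with x hux hvx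
  rw [hux, hvx]

theorem integrable_inner_of_memLp_two (hu : MemLp u 2 μ) (hv : MemLp v 2 μ) :
    Integrable (fun x => ⟪u x, v x⟫) μ :=
  (L2.integrable_inner (𝕜 := ℝ) (hu.toLp u) (hv.toLp v)).congr (inner_toLp_two_ae_eq hu hv)

theorem inner_toLp_two (hu : MemLp u 2 μ) (hv : MemLp v 2 μ) :
    inner ℝ (hu.toLp u) (hv.toLp v) = ∫ x, ⟪u x, v x⟫ ∂μ :=
  (L2.inner_def (𝕜 := ℝ) _ _).trans (integral_congr_ae (inner_toLp_two_ae_eq hu hv))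

theorem norm_toLp_two (hu : MemLp u 2 μ) : ‖hu.toLp u‖ = √(∫ x, ‖u x‖ ^ 2 ∂μ) := by
  have norm_sq : ‖hu.toLp u‖ ^ 2 = ∫ x, ‖u x‖ ^ 2 ∂μ := by
    simpa only [real_inner_self_eq_norm_sq] using inner_toLp_two hu hu
  rw [← norm_sq, Real.sqrt_sq (norm_nonneg _)]

theorem abs_integral_inner_le (hu : MemLp u 2 μ) (hv : MemLp v 2 μ) :
    |∫ x, ⟪u x, v x⟫ ∂μ| ≤ √(∫ x, ‖u x‖ ^ 2 ∂μ) * √(∫ x, ‖v x‖ ^ 2 ∂μ) := by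
  rw [← inner_toLp_two hu hv, ← norm_toLp_two hu, ← norm_toLp_two hv]
  exact abs_real_inner_le_norm _ _

theorem inner_sqrt_smul_sqrt_smul {r : ℝ} (hr : 0 ≤ r) (x y : E) :
    ⟪√r • x, √r • y⟫ = r * ⟪x, y⟫ := by
  rw [real_inner_smul_left, real_inner_smul_right, ← mul_assoc, Real.mul_self_sqrt hr]

theorem integrable_mul_inner (hq : AEStronglyMeasurable q μ) (hq0 : ∀ x, 0 ≤ q x)
    (hu : AEStronglyMeasurable u μ) (hv : AEStronglyMeasurable v μ)
    (hu2 : Integrable (fun x => q x * ‖u x‖ ^ 2) μ)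
    (hv2 : Integrable (fun x => q x * ‖v x‖ ^ 2) μ) :
    Integrable (fun x => q x * ⟪u x, v x⟫) μ := by
  simpa only [inner_sqrt_smul_sqrt_smul (hq0 _)] using integrable_inner_of_memLp_two
    (memLp_two_sqrt_smul hq hq0 hu hu2) (memLp_two_sqrt_smul hq hq0 hv hv2)

theorem abs_integral_mul_inner_le (hq : AEStronglyMeasurable q μ) (hq0 : ∀ x, 0 ≤ q x)
    (hu : AEStronglyMeasurable u μ) (hv : AEStronglyMeasurable v μ)
    (hu2 : Integrable (fun x => q x * ‖u x‖ ^ 2) μ)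
    (hv2 : Integrable (fun x => q x * ‖v x‖ ^ 2) μ) :
    |∫ x, q x * ⟪u x, v x⟫ ∂μ| ≤
      √(∫ x, q x * ‖u x‖ ^ 2 ∂μ) * √(∫ x, q x * ‖v x‖ ^ 2 ∂μ) := by
  simpa [inner_sqrt_smul_sqrt_smul, norm_smul, mul_pow, hq0] using abs_integral_inner_le
    (memLp_two_sqrt_smul hq hq0 hu hu2) (memLp_two_sqrt_smul hq hq0 hv hv2)

end WeightedCauchySchwarz

section Stein

variable {E : Type*} [NormedAddCommGroup E] [InnerProductSpace ℝ E]

theorem measurable_gradient [CompleteSpace E] [MeasurableSpace E] [BorelSpace E] (f : E → ℝ) :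
    Measurable (gradient f) :=
  (InnerProductSpace.toDual ℝ E).symm.continuous.measurable.comp (measurable_fderiv ℝ f)

theorem mul_inner_score [CompleteSpace E] {q : E → ℝ} {x : E} (hq : DifferentiableAt ℝ q x)
    (hq0 : ∀ y, 0 ≤ q y) (v : E) :
    q x * ⟪score q x, v⟫ = fderiv ℝ q x v := by
  rcases eq_or_ne (q x) 0 with hqx | hqx
  · -- A zero of `q` is a minimum, so the junk value of the score there is harmless.
    have isLocalMin : IsLocalMin q x := .of_forall fun y => hqx.trans_le (hq0 y)
    simp [hqx, isLocalMin.fderiv_eq_zero]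
  · rw [score, inner_gradient_left, fderiv.log hq hqx, smul_apply, smul_eq_mul,
      mul_inv_cancel_left₀ hqx]

variable [FiniteDimensional ℝ E] {q : E → ℝ} {s g : E → E}

theorem mul_driftSteinOp {x : E} (hq : DifferentiableAt ℝ q x) (hq0 : ∀ y, 0 ≤ q y)
    (hg : DifferentiableAt ℝ g x) :
    q x * driftSteinOp s g x =
      divergence (fun y => q y • g y) x - q x * ⟪g x, score q x - s x⟫ := by
  rw [driftSteinOp, divergence_smul hq hg, ← mul_inner_score hq hq0, inner_sub_right,
    real_inner_comm (score q x), real_inner_comm (s x)]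
  ring

variable [MeasurableSpace E] [BorelSpace E] {μ : Measure E} [μ.IsAddHaarMeasure]

theorem integral_mul_driftSteinOp (hq : ContDiff ℝ 1 q) (hq0 : ∀ x, 0 ≤ q x)
    (hg : ContDiff ℝ 1 g) (hqg : Integrable (fun x => q x • g x) μ)
    (hdiv : Integrable (divergence fun x => q x • g x) μ)
    (hinner : Integrable (fun x => q x * ⟪g x, score q x - s x⟫) μ) :
    ∫ x, q x * driftSteinOp s g x ∂μ = -∫ x, q x * ⟪g x, score q x - s x⟫ ∂μ := by
  have flux : ∫ x, divergence (fun y => q y • g y) x ∂μ = 0 :=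
    integral_divergence_eq_zero (hq.smul hg) hqg hdiv
  simp_rw [mul_driftSteinOp (hq.differentiable one_ne_zero _) hq0
    (hg.differentiable one_ne_zero _)]
  rw [integral_sub hdiv hinner, flux, zero_sub]

theorem abs_expectation_steinOp_le_general (hq : ContDiff ℝ 1 q) (hq0 : ∀ x, 0 ≤ q x)
    (hg : ContDiff ℝ 1 g) (hs : AEStronglyMeasurable s μ)
    (hqg : Integrable (fun x => q x • g x) μ)
    (hdiv : Integrable (divergence fun x => q x • g x) μ)
    (hg2 : Integrable (fun x => q x * ‖g x‖ ^ 2) μ)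
    (hF : Integrable (fun x => q x * ‖score q x - s x‖ ^ 2) μ) :
    |∫ x, q x * driftSteinOp s g x ∂μ| ≤
      √(∫ x, q x * ‖g x‖ ^ 2 ∂μ) * √(∫ x, q x * ‖score q x - s x‖ ^ 2 ∂μ) := by
  have hqm : AEStronglyMeasurable q μ := hq.continuous.aestronglyMeasurable
  have hgm : AEStronglyMeasurable g μ := hg.continuous.aestronglyMeasurable
  have hdm : AEStronglyMeasurable (fun x => score q x - s x) μ :=
    (measurable_gradient _).aestronglyMeasurable.sub hs
  rw [integral_mul_driftSteinOp hq hq0 hg hqg hdiv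
    (integrable_mul_inner hqm hq0 hgm hdm hg2 hF), abs_neg]
  exact abs_integral_mul_inner_le hqm hq0 hgm hdm hg2 hF

end Stein

/-- If `p, q` are `C¹` strictly positive probability densities on `ℝⁿ` and `g : ℝⁿ → ℝⁿ` is `C¹`
with `q·g → 0` at infinity, `∇·(q g)` Lebesgue-integrable, `∫ q‖g‖² < ∞` and the Fisher
divergence `F(q‖p) = ∫ q ‖∇ log q − ∇ log p‖² < ∞`, then
`|E_q[S_p g]| ≤ √(∫ q‖g‖²) · √(F(q‖p))`. -/
theorem abs_expectation_steinOp_le {n : ℕ}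
    (p q : EuclideanSpace ℝ (Fin n) → ℝ)
    (g : EuclideanSpace ℝ (Fin n) → EuclideanSpace ℝ (Fin n))
    (hp : ContDiff ℝ 1 p) (hppos : ∀ x, 0 < p x) (hpnorm : ∫ x, p x = 1)
    (hq : ContDiff ℝ 1 q) (hqpos : ∀ x, 0 < q x) (hqnorm : ∫ x, q x = 1)
    (hg : ContDiff ℝ 1 g)
    (hdecay : Tendsto (fun x => q x • g x) (cocompact (EuclideanSpace ℝ (Fin n))) (𝓝 0))
    (hdivint : Integrable (vdiv fun x => q x • g x))
    (hg2 : Integrable (fun x => q x * ‖g x‖ ^ 2))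
    (hF : Integrable (fun x => q x *
      ‖gradient (fun y => Real.log (q y)) x - gradient (fun y => Real.log (p y)) x‖ ^ 2)) :
    |∫ x, q x * steinOp p g x|
      ≤ Real.sqrt (∫ x, q x * ‖g x‖ ^ 2) *
        Real.sqrt (∫ x, q x *
          ‖gradient (fun y => Real.log (q y)) x - gradient (fun y => Real.log (p y)) x‖ ^ 2) := by
  have hgm : AEStronglyMeasurable g := hg.continuous.aestronglyMeasurable
  have hqi : Integrable q := .of_integral_ne_zero (by simp [hqnorm])
  have hq0 (x : EuclideanSpace ℝ (Fin n)) : 0 ≤ q x := (hqpos x).le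
  exact abs_expectation_steinOp_le_general hq hq0 hg (measurable_gradient _).aestronglyMeasurable
    (integrable_smul_of_integrable_mul_norm_sq hqi hq0 hgm hg2) hdivint hg2 hF
end

section
/- Let p and q be continuously differentiable, strictly positive probability densities on ℝⁿ. Let a: ℝⁿ → ℝ^d, b: ℝⁿ → ℝ^m, and M: ℝⁿ → ℝ^{d×m} satisfy ‖a(h)‖₂ ≤ C and ‖b(h)‖₂ ≤ C for all h. Suppose each real-valued component of a, of b, of M, and of the matrix-valued map h ↦ a(h)b(h)ᵀ admits a continuously differentiable Stein solution g with respect to p (i.e. S_p g equals that component minus its p-expectation pointwise), with q·g vanishing at infinity, ∇·(q g) Lebesgue-integrable, and ∫ q‖g‖₂² < ∞; let κ_a, κ_b, κ_M, κ_{ab} denote the corresponding Stein factors (the square root of the sum over components of ∫ q‖g‖₂² for the respective Stein solutions). Then ‖(E_q[M] + Cov_q(a,b)) − (E_p[M] + Cov_p(a,b))‖_F ≤ (κ_{ab} + C·κ_b + C·κ_a + κ_M) · √(F(q‖p)). (Applied with a = ∇_v log p̃_θ(v,·), b = ∇_θ log p̃_θ(v,·), M = ∂∇_v log p̃_θ(v,·)/∂θ,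 p the true posterior and q the variational posterior, this bounds the bias of VaGES by the square root of the Fisher divergence between variational and true posterior up to a constant.) -/
open MeasureTheory Filter Topology
open scoped RealInnerProductSpace ENNReal

/-- The Fisher divergence `F(q‖p) = ∫ q(x) ‖∇ log q(x) − ∇ log p(x)‖₂² dx` (as an extended
nonnegative real, so that it is `+∞` when the integral diverges). -/
noncomputable def fisherDivL {n : ℕ} (q p : EuclideanSpace ℝ (Fin n) → ℝ) : ℝ≥0∞ :=
  ∫⁻ x, ENNReal.ofReal (q x *
    ‖gradient (fun y => Real.log (q y)) x - gradient (fun y => Real.log (p y)) x‖ ^ 2)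

/-- `g` is a Stein solution for the scalar function `f` w.r.t. the density `p` (with regularity
conditions stated relative to the density `q`): `g` is `C¹`, it solves the Stein equation
`S_p g = f − E_p f` pointwise, `q·g` vanishes at infinity, `∇·(q g)` is Lebesgue-integrable,
and `∫ q‖g‖² < ∞`. -/
noncomputable def SteinSolution {n : ℕ} (p q : EuclideanSpace ℝ (Fin n) → ℝ)
    (f : EuclideanSpace ℝ (Fin n) → ℝ)
    (g : EuclideanSpace ℝ (Fin n) → EuclideanSpace ℝ (Fin n)) : Prop :=
  ContDiff ℝ 1 g ∧ (∀ x, steinOp p g x = f x - ∫ y, p y * f y) ∧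
    Tendsto (fun x => q x • g x) (cocompact (EuclideanSpace ℝ (Fin n))) (𝓝 0) ∧
    Integrable (vdiv fun x => q x • g x) ∧ Integrable (fun x => q x * ‖g x‖ ^ 2)

/-- The outer product `a bᵀ`, viewed as an element of `ℝ^{d×m}` with the Frobenius norm. -/
noncomputable def outer {d m : ℕ} (a : EuclideanSpace ℝ (Fin d))
    (b : EuclideanSpace ℝ (Fin m)) : EuclideanSpace ℝ (Fin d × Fin m) :=
  (WithLp.equiv 2 (Fin d × Fin m → ℝ)).symm fun ij => a ij.1 * b ij.2

/-!
Writing `D = ∇ log q - ∇ log p`, the two Stein operators differ by `S_q g - S_p g = ⟨D, g⟩`, while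
`q · S_q g = ∇·(q g)` integrates to `0`: since `‖g‖ ≤ 1 + ‖g‖²`, the field `q g` is integrable, so
the error of a cutoff at radius `k` is `O(1/k)`. Hence a solution `g` of `S_p g = f - E_p f` gives
`E_q f - E_p f = E_q[S_p g] = -E_q⟨D, g⟩`, which Cauchy–Schwarz in `L²(q)` bounds by
`(E_q ‖g‖²)^{1/2} F(q‖p)^{1/2}`. The covariance is handled through
`a bᵀ - a' b'ᵀ = a (b - b')ᵀ + (a - a') b'ᵀ`, applied to the means.
-/

open scoped ContDiff

section Divergence

variable {E F : Type*} [NormedAddCommGroup E] [NormedSpace ℝ E] [FiniteDimensional ℝ E]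
  [NormedAddCommGroup F] [NormedSpace ℝ F]

lemma trace_fderiv_smul {q : E → ℝ} {G : E → E} {x : E} (hq : DifferentiableAt ℝ q x)
    (hG : DifferentiableAt ℝ G x) :
    LinearMap.trace ℝ E (fderiv ℝ (fun y => q y • G y) x).toLinearMap
      = q x * LinearMap.trace ℝ E (fderiv ℝ G x).toLinearMap + fderiv ℝ q x (G x) := by
  rw [fderiv_fun_smul hq hG, ContinuousLinearMap.toLinearMap_add, map_add,
    ContinuousLinearMap.toLinearMap_smul, map_smul, smul_eq_mul]
  exact congrArg _ (LinearMap.trace_smulRight (fderiv ℝ q x).toLinearMap (G x))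

lemma continuous_trace_fderiv {G : E → E} (hG : ContDiff ℝ 1 G) :
    Continuous fun x => LinearMap.trace ℝ E (fderiv ℝ G x).toLinearMap :=
  (LinearMap.trace ℝ E ∘ₗ ContinuousLinearMap.coeLM ℝ).continuous_of_finiteDimensional.comp
    (hG.continuous_fderiv one_ne_zero)

variable (E) in
lemma exists_seq_cutoff :
    ∃ (χ : ℕ → E → ℝ) (ε : ℕ → ℝ), (∀ k, ContDiff ℝ ∞ (χ k)) ∧ (∀ k, HasCompactSupport (χ k)) ∧
      (∀ k x, ‖χ k x‖ ≤ 1) ∧ (∀ x, ∀ᶠ k in atTop, χ k x = 1) ∧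
      (∀ k x, ‖fderiv ℝ (χ k) x‖ ≤ ε k) ∧ Tendsto ε atTop (𝓝 0) := by
  let φ : ContDiffBump (0 : E) := ⟨1, 2, one_pos, one_lt_two⟩
  have hφ : ContDiff ℝ ∞ φ := φ.contDiff
  obtain ⟨B, hB⟩ : ∃ B, ∀ x, ‖fderiv ℝ φ x‖ ≤ B :=
    (hφ.continuous_fderiv (by simp)).bounded_above_of_compact_support
      (φ.hasCompactSupport.fderiv ℝ)
  let r : ℕ → ℝ := fun k => 1 / ((k : ℝ) + 1)
  have r_pos : ∀ k, 0 < r k := fun k => Nat.one_div_pos_of_nat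
  have r_tendsto : Tendsto r atTop (𝓝 0) := tendsto_one_div_add_atTop_nhds_zero_nat
  refine ⟨fun k x => φ (r k • x), fun k => r k * B, fun k => hφ.comp (contDiff_const_smul (r k)),
    fun k => φ.hasCompactSupport.comp_homeomorph (Homeomorph.smulOfNeZero (r k) (r_pos k).ne'),
    fun k x => ?_, fun x => ?_, fun k x => ?_, by simpa using r_tendsto.mul_const B⟩
  · rw [Real.norm_of_nonneg φ.nonneg]
    exact φ.le_one
  · have : Tendsto (fun k => r k • x) atTop (𝓝 0) := by simpa using r_tendsto.smul_const x
    exact this.eventually φ.eventuallyEq_one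
  · rw [fderiv_comp_smul, norm_smul, Real.norm_of_nonneg (r_pos k).le]
    exact mul_le_mul_of_nonneg_left (hB _) (r_pos k).le

variable [MeasurableSpace E] [BorelSpace E] (μ : Measure E) [μ.IsAddHaarMeasure]

lemma integral_fderiv_eq_zero_of_hasCompactSupport {G : E → F} (hG : ContDiff ℝ 1 G)
    (hGs : HasCompactSupport G) : ∫ x, fderiv ℝ G x ∂μ = 0 := by
  have hG' : Integrable (fderiv ℝ G) μ :=
    (hG.continuous_fderiv one_ne_zero).integrable_of_hasCompactSupport (hGs.fderiv ℝ)
  ext v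
  rw [ContinuousLinearMap.integral_apply hG']
  have := integral_smul_fderiv_eq_neg_fderiv_smul_of_integrable (μ := μ) (𝕜 := ℝ)
    (f := fun _ => (1 : ℝ)) (g := G) (v := v) (by simp)
    (by simpa using hG'.apply_continuousLinearMap v)
    (by simpa using hG.continuous.integrable_of_hasCompactSupport hGs)
    (by simp) (fun x _ => hG.differentiable one_ne_zero x)
  simpa using this

lemma integral_trace_fderiv_eq_zero_of_hasCompactSupport {G : E → E} (hG : ContDiff ℝ 1 G)
    (hGs : HasCompactSupport G) :
    ∫ x, LinearMap.trace ℝ E (fderiv ℝ G x).toLinearMap ∂μ = 0 := by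
  let tr : (E →L[ℝ] E) →L[ℝ] ℝ :=
    (LinearMap.trace ℝ E ∘ₗ ContinuousLinearMap.coeLM ℝ).toContinuousLinearMap
  have hG' : Integrable (fderiv ℝ G) μ :=
    (hG.continuous_fderiv one_ne_zero).integrable_of_hasCompactSupport (hGs.fderiv ℝ)
  calc ∫ x, tr (fderiv ℝ G x) ∂μ = tr (∫ x, fderiv ℝ G x ∂μ) := tr.integral_comp_comm hG'
    _ = 0 := by rw [integral_fderiv_eq_zero_of_hasCompactSupport μ hG hGs, map_zero]

lemma integral_mul_trace_fderiv_eq_neg {χ : E → ℝ} (hχ : ContDiff ℝ 1 χ)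
    (hχs : HasCompactSupport χ) {G : E → E} (hG : ContDiff ℝ 1 G) :
    ∫ x, χ x * LinearMap.trace ℝ E (fderiv ℝ G x).toLinearMap ∂μ
      = -∫ x, fderiv ℝ χ x (G x) ∂μ := by
  have hdiv : Integrable (fun x => χ x * LinearMap.trace ℝ E (fderiv ℝ G x).toLinearMap) μ :=
    (hχ.continuous.mul (continuous_trace_fderiv hG)).integrable_of_hasCompactSupport hχs.mul_right
  have hgrad : Integrable (fun x => fderiv ℝ χ x (G x)) μ :=
    ((hχ.continuous_fderiv one_ne_zero).clm_apply hG.continuous).integrable_of_hasCompactSupport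
      ((hχs.fderiv ℝ).mono fun x hx h => hx (by simp [h]))
  have := integral_trace_fderiv_eq_zero_of_hasCompactSupport μ (hχ.smul hG)
    (hχs.smul_right (f' := G))
  rw [← add_eq_zero_iff_eq_neg, ← integral_add hdiv hgrad, ← this]
  exact integral_congr_ae <| .of_forall fun x => (trace_fderiv_smul
    (hχ.differentiable one_ne_zero x) (hG.differentiable one_ne_zero x)).symm

theorem integral_trace_fderiv_eq_zero {G : E → E} (hG : ContDiff ℝ 1 G) (hGi : Integrable G μ)
    (hdiv : Integrable (fun x => LinearMap.trace ℝ E (fderiv ℝ G x).toLinearMap) μ) :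
    ∫ x, LinearMap.trace ℝ E (fderiv ℝ G x).toLinearMap ∂μ = 0 := by
  obtain ⟨χ, ε, hχ, hχs, hχ_le, hχ_one, hχ', hε⟩ := exists_seq_cutoff E
  have to_integral : Tendsto
      (fun k => ∫ x, χ k x * LinearMap.trace ℝ E (fderiv ℝ G x).toLinearMap ∂μ) atTop
      (𝓝 (∫ x, LinearMap.trace ℝ E (fderiv ℝ G x).toLinearMap ∂μ)) := by
    refine tendsto_integral_of_dominated_convergence _
      (fun k => (hχ k).continuous.aestronglyMeasurable.mul hdiv.aestronglyMeasurable) hdiv.norm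
      (fun k => .of_forall fun x => ?_) (.of_forall fun x => ?_)
    · rw [norm_mul]
      exact mul_le_of_le_one_left (norm_nonneg _) (hχ_le k x)
    · refine tendsto_const_nhds.congr' ?_
      filter_upwards [hχ_one x] with k hk
      rw [hk, one_mul]
  have to_zero : Tendsto
      (fun k => ∫ x, χ k x * LinearMap.trace ℝ E (fderiv ℝ G x).toLinearMap ∂μ) atTop (𝓝 0) := by
    refine squeeze_zero_norm (fun k => ?_) (by simpa using hε.mul_const (∫ x, ‖G x‖ ∂μ))
    rw [integral_mul_trace_fderiv_eq_neg μ ((hχ k).of_le (by simp)) (hχs k) hG, norm_neg,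
      ← integral_const_mul]
    exact norm_integral_le_of_norm_le (hGi.norm.const_mul (ε k))
      (.of_forall fun x => ContinuousLinearMap.le_of_opNorm_le _ (hχ' k x) _)
  exact tendsto_nhds_unique to_integral to_zero

end Divergence

section WeightedIntegrals

variable {α : Type*} [MeasurableSpace α] {μ : Measure α} {w : α → ℝ}

lemma integrable_smul_of_integrable_mul_norm_sq_s7 {F : Type*} [NormedAddCommGroup F]
    [NormedSpace ℝ F] {u : α → F} (hw_nonneg : ∀ x, 0 ≤ w x) (hw : Integrable w μ)
    (hu : AEStronglyMeasurable u μ) (hwu : Integrable (fun x => w x * ‖u x‖ ^ 2) μ) :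
    Integrable (fun x => w x • u x) μ := by
  refine (hw.add hwu).mono' (hw.aestronglyMeasurable.smul hu) (.of_forall fun x => ?_)
  have : ‖u x‖ ≤ 1 + ‖u x‖ ^ 2 := by nlinarith [sq_nonneg (‖u x‖ - 1), norm_nonneg (u x)]
  calc ‖w x • u x‖ = w x * ‖u x‖ := by rw [norm_smul, Real.norm_of_nonneg (hw_nonneg x)]
    _ ≤ w x * (1 + ‖u x‖ ^ 2) := mul_le_mul_of_nonneg_left this (hw_nonneg x)
    _ = w x + w x * ‖u x‖ ^ 2 := by ring

lemma norm_integral_smul_le {F : Type*} [NormedAddCommGroup F] [NormedSpace ℝ F] {u : α → F}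
    {C : ℝ} (hw_nonneg : ∀ x, 0 ≤ w x) (hw : ∫ x, w x ∂μ = 1) (hu : ∀ x, ‖u x‖ ≤ C) :
    ‖∫ x, w x • u x ∂μ‖ ≤ C := by
  have hwC := (integrable_of_integral_eq_one hw).mul_const C
  calc ‖∫ x, w x • u x ∂μ‖ ≤ ∫ x, w x * C ∂μ :=
        norm_integral_le_of_norm_le hwC <| .of_forall fun x => by
          rw [norm_smul, Real.norm_of_nonneg (hw_nonneg x)]
          exact mul_le_mul_of_nonneg_left (hu x) (hw_nonneg x)
    _ = C := by rw [integral_mul_const, hw, one_mul]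

lemma integral_smul_apply {ι : Type*} [Fintype ι] {u : α → EuclideanSpace ℝ ι}
    (hwu : Integrable (fun x => w x • u x) μ) (i : ι) :
    (∫ x, w x • u x ∂μ) i = ∫ x, w x * u x i ∂μ :=
  ((EuclideanSpace.proj i : EuclideanSpace ℝ ι →L[ℝ] ℝ).integral_comp_comm hwu).symm

lemma lintegral_enorm_mul_inner_le {H : Type*} [NormedAddCommGroup H] [InnerProductSpace ℝ H]
    {u v : α → H} (hw_nonneg : ∀ x, 0 ≤ w x) (hw : AEMeasurable w μ)
    (hu : AEStronglyMeasurable u μ) (hv : AEStronglyMeasurable v μ) :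
    ∫⁻ x, ‖w x * ⟪u x, v x⟫‖ₑ ∂μ ≤
      (∫⁻ x, ENNReal.ofReal (w x * ‖u x‖ ^ 2) ∂μ) ^ (2⁻¹ : ℝ)
        * (∫⁻ x, ENNReal.ofReal (w x * ‖v x‖ ^ 2) ∂μ) ^ (2⁻¹ : ℝ) := by
  have sq_ofReal (x : α) (y : H) :
      ENNReal.ofReal (√(w x) * ‖y‖) ^ (2 : ℝ) = ENNReal.ofReal (w x * ‖y‖ ^ 2) := by
    rw [ENNReal.rpow_two, ← ENNReal.ofReal_pow (by positivity), mul_pow, Real.sq_sqrt (hw_nonneg x)]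
  have holder := ENNReal.lintegral_mul_le_Lp_mul_Lq μ Real.HolderConjugate.two_two
    (hw.sqrt.mul hu.norm.aemeasurable).ennreal_ofReal
    (hw.sqrt.mul hv.norm.aemeasurable).ennreal_ofReal
  simp only [Pi.mul_apply, sq_ofReal, one_div] at holder
  refine (lintegral_mono fun x => ?_).trans holder
  rw [← ENNReal.ofReal_mul (by positivity), ← ofReal_norm]
  refine ENNReal.ofReal_le_ofReal ?_
  calc ‖w x * ⟪u x, v x⟫‖ = w x * ‖⟪u x, v x⟫‖ := by
        rw [norm_mul, Real.norm_of_nonneg (hw_nonneg x)]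
    _ ≤ w x * (‖u x‖ * ‖v x‖) :=
        mul_le_mul_of_nonneg_left (norm_inner_le_norm _ _) (hw_nonneg x)
    _ = √(w x) * ‖u x‖ * (√(w x) * ‖v x‖) := by
        linear_combination -(‖u x‖ * ‖v x‖) * Real.mul_self_sqrt (hw_nonneg x)

lemma lintegral_ofReal_rpow_half_eq_ofReal_sqrt_integral (hw_nonneg : ∀ x, 0 ≤ w x)
    (hw : Integrable w μ) :
    (∫⁻ x, ENNReal.ofReal (w x) ∂μ) ^ (2⁻¹ : ℝ) = ENNReal.ofReal √(∫ x, w x ∂μ) := by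
  rw [← ofReal_integral_eq_lintegral_ofReal hw (.of_forall hw_nonneg), Real.sqrt_eq_rpow, one_div,
    ENNReal.ofReal_rpow_of_nonneg (integral_nonneg hw_nonneg) (by norm_num)]

end WeightedIntegrals

lemma enorm_le_ofReal_sqrt_sum_mul {ι : Type*} [Fintype ι] {v : EuclideanSpace ℝ ι} {t : ι → ℝ}
    (ht : ∀ i, 0 ≤ t i) {S : ℝ≥0∞} (hv : ∀ i, ‖v i‖ₑ ≤ ENNReal.ofReal √(t i) * S) :
    ‖v‖ₑ ≤ ENNReal.ofReal √(∑ i, t i) * S := by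
  have ofReal_sqrt_sq {s : ℝ} (hs : 0 ≤ s) : ENNReal.ofReal √s ^ 2 = ENNReal.ofReal s := by
    rw [← ENNReal.ofReal_pow (Real.sqrt_nonneg s), Real.sq_sqrt hs]
  have enorm_sq : ‖v‖ₑ ^ 2 = ∑ i, ‖v i‖ₑ ^ 2 := by
    simp_rw [← ofReal_norm, ← ENNReal.ofReal_pow (norm_nonneg _)]
    rw [EuclideanSpace.norm_sq_eq, ENNReal.ofReal_sum_of_nonneg fun i _ => sq_nonneg _]
  refine (ENNReal.pow_le_pow_left_iff two_ne_zero).1 ?_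
  calc ‖v‖ₑ ^ 2 = ∑ i, ‖v i‖ₑ ^ 2 := enorm_sq
    _ ≤ ∑ i, (ENNReal.ofReal √(t i) * S) ^ 2 :=
        Finset.sum_le_sum fun i _ => pow_le_pow_left' (hv i) 2
    _ = (ENNReal.ofReal √(∑ i, t i) * S) ^ 2 := by
        simp only [mul_pow, ofReal_sqrt_sq (ht _), Finset.sum_mul,
          ofReal_sqrt_sq (Finset.sum_nonneg fun i _ => ht i),
          ENNReal.ofReal_sum_of_nonneg fun i _ => ht i]

lemma continuous_gradient_log {H : Type*} [NormedAddCommGroup H] [InnerProductSpace ℝ H]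
    [CompleteSpace H] {p : H → ℝ} (hp : ContDiff ℝ 1 p) (hp0 : ∀ x, p x ≠ 0) :
    Continuous (gradient fun y => Real.log (p y)) :=
  (InnerProductSpace.toDual ℝ H).symm.continuous.comp
    ((hp.log hp0).continuous_fderiv one_ne_zero)

section Stein

variable {n : ℕ} {p q : EuclideanSpace ℝ (Fin n) → ℝ}
  {g : EuclideanSpace ℝ (Fin n) → EuclideanSpace ℝ (Fin n)}

lemma vdiv_smul_eq_mul_steinOp {x : EuclideanSpace ℝ (Fin n)} (hq : DifferentiableAt ℝ q x)
    (hqx : q x ≠ 0) (hg : DifferentiableAt ℝ g x) :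
    vdiv (fun y => q y • g y) x = q x * steinOp q g x := by
  have inner_score : q x * ⟪gradient (fun y => Real.log (q y)) x, g x⟫ = fderiv ℝ q x (g x) := by
    rw [inner_gradient_left, fderiv.log hq hqx, smul_apply, smul_eq_mul, mul_inv_cancel_left₀ hqx]
  rw [vdiv, trace_fderiv_smul hq hg, steinOp, vdiv, mul_add, inner_score, add_comm]

lemma steinOp_sub_steinOp (p q : EuclideanSpace ℝ (Fin n) → ℝ)
    (g : EuclideanSpace ℝ (Fin n) → EuclideanSpace ℝ (Fin n)) (x : EuclideanSpace ℝ (Fin n)) :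
    steinOp q g x - steinOp p g x =
      ⟪gradient (fun y => Real.log (q y)) x - gradient (fun y => Real.log (p y)) x, g x⟫ := by
  rw [steinOp, steinOp, inner_sub_left]
  ring

lemma integral_mul_steinOp_self (hq : ContDiff ℝ 1 q) (hq_pos : ∀ x, 0 < q x)
    (hqi : Integrable q) (hg : ContDiff ℝ 1 g) (hdiv : Integrable (vdiv fun x => q x • g x))
    (hg2 : Integrable fun x => q x * ‖g x‖ ^ 2) :
    ∫ x, q x * steinOp q g x = 0 := by
  have hqg : Integrable fun x => q x • g x := integrable_smul_of_integrable_mul_norm_sq_s7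
    (fun x => (hq_pos x).le) hqi hg.continuous.aestronglyMeasurable hg2
  simp_rw [← vdiv_smul_eq_mul_steinOp (hq.differentiable one_ne_zero _) (hq_pos _).ne'
    (hg.differentiable one_ne_zero _)]
  exact integral_trace_fderiv_eq_zero volume (hq.smul hg) hqg hdiv

theorem enorm_integral_mul_steinOp_le (hp : ContDiff ℝ 1 p) (hp_pos : ∀ x, 0 < p x)
    (hq : ContDiff ℝ 1 q) (hq_pos : ∀ x, 0 < q x) (hqi : Integrable q) (hg : ContDiff ℝ 1 g)
    (hdiv : Integrable (vdiv fun x => q x • g x)) (hg2 : Integrable fun x => q x * ‖g x‖ ^ 2)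
    (hpg : Integrable fun x => q x * steinOp p g x) :
    ‖∫ x, q x * steinOp p g x‖ₑ ≤
      ENNReal.ofReal √(∫ x, q x * ‖g x‖ ^ 2) * fisherDivL q p ^ (2⁻¹ : ℝ) := by
  let D := fun x => gradient (fun y => Real.log (q y)) x - gradient (fun y => Real.log (p y)) x
  have hD : Continuous D := (continuous_gradient_log hq fun x => (hq_pos x).ne').sub
    (continuous_gradient_log hp fun x => (hp_pos x).ne')
  have hqg : Integrable fun x => q x * steinOp q g x := hdiv.congr <| .of_forall fun x =>
    vdiv_smul_eq_mul_steinOp (hq.differentiable one_ne_zero x) (hq_pos x).ne'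
      (hg.differentiable one_ne_zero x)
  have stein_identity : ∫ x, q x * ⟪D x, g x⟫ = -∫ x, q x * steinOp p g x := by
    simp_rw [D, ← steinOp_sub_steinOp, mul_sub]
    rw [integral_sub hqg hpg, integral_mul_steinOp_self hq hq_pos hqi hg hdiv hg2, zero_sub]
  have hq_nonneg (x : EuclideanSpace ℝ (Fin n)) : 0 ≤ q x := (hq_pos x).le
  calc ‖∫ x, q x * steinOp p g x‖ₑ = ‖∫ x, q x * ⟪D x, g x⟫‖ₑ := by
        rw [stein_identity, enorm_neg]
    _ ≤ ∫⁻ x, ‖q x * ⟪D x, g x⟫‖ₑ := enorm_integral_le_lintegral_enorm _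
    _ ≤ fisherDivL q p ^ (2⁻¹ : ℝ)
          * (∫⁻ x, ENNReal.ofReal (q x * ‖g x‖ ^ 2)) ^ (2⁻¹ : ℝ) :=
        lintegral_enorm_mul_inner_le hq_nonneg hqi.aemeasurable hD.aestronglyMeasurable
          hg.continuous.aestronglyMeasurable
    _ = ENNReal.ofReal √(∫ x, q x * ‖g x‖ ^ 2) * fisherDivL q p ^ (2⁻¹ : ℝ) := by
        rw [lintegral_ofReal_rpow_half_eq_ofReal_sqrt_integral
          (fun x => mul_nonneg (hq_nonneg x) (sq_nonneg _)) hg2, mul_comm]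

end Stein

/-- A Stein solution for `f` with respect to `p` that is square-integrable with respect to `q`:
`SteinSolution` without the decay of `q·g` at infinity. -/
structure L2SteinSolution {n : ℕ} (p q f : EuclideanSpace ℝ (Fin n) → ℝ)
    (g : EuclideanSpace ℝ (Fin n) → EuclideanSpace ℝ (Fin n)) : Prop where
  contDiff : ContDiff ℝ 1 g
  steinOp_eq : ∀ x, steinOp p g x = f x - ∫ y, p y * f y
  integrable_vdiv : Integrable (vdiv fun x => q x • g x)
  integrable_mul_norm_sq : Integrable fun x => q x * ‖g x‖ ^ 2

lemma SteinSolution.l2SteinSolution {n : ℕ} {p q f : EuclideanSpace ℝ (Fin n) → ℝ}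
    {g : EuclideanSpace ℝ (Fin n) → EuclideanSpace ℝ (Fin n)} (h : SteinSolution p q f g) :
    L2SteinSolution p q f g :=
  ⟨h.1, h.2.1, h.2.2.2.1, h.2.2.2.2⟩

/-- The Stein factor `κ` of a family `g` of Stein solutions, one for each component of a vector-
or matrix-valued function. -/
noncomputable def steinFactor {n : ℕ} {ι : Type*} [Fintype ι] (q : EuclideanSpace ℝ (Fin n) → ℝ)
    (g : ι → EuclideanSpace ℝ (Fin n) → EuclideanSpace ℝ (Fin n)) : ℝ :=
  √(∑ i, ∫ x, q x * ‖g i x‖ ^ 2)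

lemma steinFactor_nonneg {n : ℕ} {ι : Type*} [Fintype ι] (q : EuclideanSpace ℝ (Fin n) → ℝ)
    (g : ι → EuclideanSpace ℝ (Fin n) → EuclideanSpace ℝ (Fin n)) : 0 ≤ steinFactor q g :=
  Real.sqrt_nonneg _

/-- The cross-covariance matrix `Cov_q(a, b)` of `a` and `b` under the density `q`, encoded, like
`outer`, as a vector indexed by pairs so that its norm is the Frobenius norm. -/
noncomputable def crossCov {n d m : ℕ} (q : EuclideanSpace ℝ (Fin n) → ℝ)
    (a : EuclideanSpace ℝ (Fin n) → EuclideanSpace ℝ (Fin d))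
    (b : EuclideanSpace ℝ (Fin n) → EuclideanSpace ℝ (Fin m)) : EuclideanSpace ℝ (Fin d × Fin m) :=
  (∫ x, q x • outer (a x) (b x)) - outer (∫ x, q x • a x) (∫ x, q x • b x)

lemma enorm_outer {d m : ℕ} (u : EuclideanSpace ℝ (Fin d)) (v : EuclideanSpace ℝ (Fin m)) :
    ‖outer u v‖ₑ = ‖u‖ₑ * ‖v‖ₑ := by
  have norm_outer : ‖outer u v‖ = ‖u‖ * ‖v‖ := by
    rw [EuclideanSpace.norm_eq, EuclideanSpace.norm_eq, EuclideanSpace.norm_eq,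
      ← Real.sqrt_mul (by positivity), Fintype.sum_prod_type, Finset.sum_mul_sum]
    simp [outer, mul_pow]
  rw [← ofReal_norm, norm_outer, ENNReal.ofReal_mul (norm_nonneg u), ofReal_norm, ofReal_norm]

lemma outer_sub_outer {d m : ℕ} (u u' : EuclideanSpace ℝ (Fin d))
    (v v' : EuclideanSpace ℝ (Fin m)) :
    outer u v - outer u' v' = outer u (v - v') + outer (u - u') v' := by
  ext ij
  simp [outer]
  ring

lemma enorm_crossCov_sub_crossCov_le {n d m : ℕ} (p q : EuclideanSpace ℝ (Fin n) → ℝ)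
    (a : EuclideanSpace ℝ (Fin n) → EuclideanSpace ℝ (Fin d))
    (b : EuclideanSpace ℝ (Fin n) → EuclideanSpace ℝ (Fin m)) :
    ‖crossCov q a b - crossCov p a b‖ₑ ≤
      ‖(∫ x, q x • outer (a x) (b x)) - ∫ x, p x • outer (a x) (b x)‖ₑ
        + ‖∫ x, q x • a x‖ₑ * ‖(∫ x, q x • b x) - ∫ x, p x • b x‖ₑ
        + ‖(∫ x, q x • a x) - ∫ x, p x • a x‖ₑ * ‖∫ x, p x • b x‖ₑ := by
  rw [crossCov, crossCov, sub_sub_sub_comm, outer_sub_outer, add_assoc, ← enorm_outer,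
    ← enorm_outer]
  exact enorm_sub_le.trans (add_le_add_right (enorm_add_le _ _) _)

section Bias

variable {n : ℕ} {p q : EuclideanSpace ℝ (Fin n) → ℝ}

theorem L2SteinSolution.enorm_mean_sub_mean_le {f : EuclideanSpace ℝ (Fin n) → ℝ}
    {g : EuclideanSpace ℝ (Fin n) → EuclideanSpace ℝ (Fin n)} (h : L2SteinSolution p q f g)
    (hp : ContDiff ℝ 1 p) (hp_pos : ∀ x, 0 < p x) (hq : ContDiff ℝ 1 q) (hq_pos : ∀ x, 0 < q x)
    (hq_one : ∫ x, q x = 1) (hqf : Integrable fun x => q x * f x) :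
    ‖(∫ x, q x * f x) - ∫ x, p x * f x‖ₑ ≤
      ENNReal.ofReal √(∫ x, q x * ‖g x‖ ^ 2) * fisherDivL q p ^ (2⁻¹ : ℝ) := by
  have hqi : Integrable q := integrable_of_integral_eq_one hq_one
  have steinOp_eq (x : EuclideanSpace ℝ (Fin n)) :
      q x * steinOp p g x = q x * f x - q x * ∫ y, p y * f y := by
    rw [h.steinOp_eq, mul_sub]
  have hpg : Integrable fun x => q x * steinOp p g x := by
    simp_rw [steinOp_eq]
    exact hqf.sub (hqi.mul_const _)
  have mean_sub_mean : (∫ x, q x * f x) - ∫ x, p x * f x = ∫ x, q x * steinOp p g x := by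
    simp_rw [steinOp_eq]
    rw [integral_sub hqf (hqi.mul_const _), integral_mul_const, hq_one, one_mul]
  rw [mean_sub_mean]
  exact enorm_integral_mul_steinOp_le hp hp_pos hq hq_pos hqi h.contDiff h.integrable_vdiv
    h.integrable_mul_norm_sq hpg

theorem enorm_mean_sub_mean_le_steinFactor {ι : Type*} [Fintype ι]
    {f : EuclideanSpace ℝ (Fin n) → EuclideanSpace ℝ ι}
    {g : ι → EuclideanSpace ℝ (Fin n) → EuclideanSpace ℝ (Fin n)}
    (hp : ContDiff ℝ 1 p) (hp_pos : ∀ x, 0 < p x) (hq : ContDiff ℝ 1 q) (hq_pos : ∀ x, 0 < q x)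
    (hq_one : ∫ x, q x = 1) (hg : ∀ i, L2SteinSolution p q (fun x => f x i) (g i))
    (hqf : Integrable fun x => q x • f x) (hpf : Integrable fun x => p x • f x) :
    ‖(∫ x, q x • f x) - ∫ x, p x • f x‖ₑ ≤
      ENNReal.ofReal (steinFactor q g) * fisherDivL q p ^ (2⁻¹ : ℝ) := by
  refine enorm_le_ofReal_sqrt_sum_mul
    (fun i => integral_nonneg fun x => mul_nonneg (hq_pos x).le (sq_nonneg _)) fun i => ?_
  rw [PiLp.sub_apply, integral_smul_apply hqf, integral_smul_apply hpf]
  exact (hg i).enorm_mean_sub_mean_le hp hp_pos hq hq_pos hq_one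
    ((EuclideanSpace.proj i : EuclideanSpace ℝ ι →L[ℝ] ℝ).integrable_comp hqf)

theorem vages_bias_le_sqrt_fisher_general {d m : ℕ}
    (hp : ContDiff ℝ 1 p) (hp_pos : ∀ x, 0 < p x) (hq : ContDiff ℝ 1 q) (hq_pos : ∀ x, 0 < q x)
    (hq_one : ∫ x, q x = 1)
    {a : EuclideanSpace ℝ (Fin n) → EuclideanSpace ℝ (Fin d)}
    {b : EuclideanSpace ℝ (Fin n) → EuclideanSpace ℝ (Fin m)}
    {M : EuclideanSpace ℝ (Fin n) → EuclideanSpace ℝ (Fin d × Fin m)}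
    {ga : Fin d → EuclideanSpace ℝ (Fin n) → EuclideanSpace ℝ (Fin n)}
    {gb : Fin m → EuclideanSpace ℝ (Fin n) → EuclideanSpace ℝ (Fin n)}
    {gM gab : Fin d × Fin m → EuclideanSpace ℝ (Fin n) → EuclideanSpace ℝ (Fin n)}
    (hga : ∀ i, L2SteinSolution p q (fun x => a x i) (ga i))
    (hgb : ∀ j, L2SteinSolution p q (fun x => b x j) (gb j))
    (hgM : ∀ ij, L2SteinSolution p q (fun x => M x ij) (gM ij))
    (hgab : ∀ ij : Fin d × Fin m, L2SteinSolution p q (fun x => a x ij.1 * b x ij.2) (gab ij))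
    (hqa : Integrable fun x => q x • a x) (hpa : Integrable fun x => p x • a x)
    (hqb : Integrable fun x => q x • b x) (hpb : Integrable fun x => p x • b x)
    (hqM : Integrable fun x => q x • M x) (hpM : Integrable fun x => p x • M x)
    (hqab : Integrable fun x => q x • outer (a x) (b x))
    (hpab : Integrable fun x => p x • outer (a x) (b x)) {A B : ℝ}
    (hA : ‖∫ x, q x • a x‖ ≤ A) (hB : ‖∫ x, p x • b x‖ ≤ B) :
    ‖((∫ x, q x • M x) + crossCov q a b) - ((∫ x, p x • M x) + crossCov p a b)‖ₑ ≤
      ENNReal.ofReal (steinFactor q gab + A * steinFactor q gb + B * steinFactor q ga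
        + steinFactor q gM) * fisherDivL q p ^ (2⁻¹ : ℝ) := by
  set S := fisherDivL q p ^ (2⁻¹ : ℝ)
  have hab := enorm_mean_sub_mean_le_steinFactor hp hp_pos hq hq_pos hq_one
    (f := fun x => outer (a x) (b x)) hgab hqab hpab
  have ha := enorm_mean_sub_mean_le_steinFactor hp hp_pos hq hq_pos hq_one hga hqa hpa
  have hb := enorm_mean_sub_mean_le_steinFactor hp hp_pos hq hq_pos hq_one hgb hqb hpb
  have hM := enorm_mean_sub_mean_le_steinFactor hp hp_pos hq hq_pos hq_one hgM hqM hpM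
  have hA_nonneg : 0 ≤ A := (norm_nonneg _).trans hA
  have hB_nonneg : 0 ≤ B := (norm_nonneg _).trans hB
  rw [← ENNReal.ofReal_le_ofReal_iff hA_nonneg, ofReal_norm] at hA
  rw [← ENNReal.ofReal_le_ofReal_iff hB_nonneg, ofReal_norm] at hB
  have hκa := steinFactor_nonneg q ga
  have hκb := steinFactor_nonneg q gb
  have hκab := steinFactor_nonneg q gab
  have hκM := steinFactor_nonneg q gM
  rw [add_sub_add_comm, add_comm]
  calc _ ≤ ‖crossCov q a b - crossCov p a b‖ₑ + ‖(∫ x, q x • M x) - ∫ x, p x • M x‖ₑ :=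
        enorm_add_le _ _
    _ ≤ (ENNReal.ofReal (steinFactor q gab) * S
          + ENNReal.ofReal A * (ENNReal.ofReal (steinFactor q gb) * S)
          + ENNReal.ofReal (steinFactor q ga) * S * ENNReal.ofReal B)
          + ENNReal.ofReal (steinFactor q gM) * S := by
        refine add_le_add ((enorm_crossCov_sub_crossCov_le p q a b).trans ?_) hM
        gcongr
    _ = _ := by
        rw [ENNReal.ofReal_add (by positivity) (by positivity),
          ENNReal.ofReal_add (by positivity) (by positivity),
          ENNReal.ofReal_add (by positivity) (by positivity), ENNReal.ofReal_mul hA_nonneg,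
          ENNReal.ofReal_mul hB_nonneg]
        ring

end Bias

/-- **Bias of VaGES, Fisher version.** Let `p, q` be `C¹` strictly positive probability
densities on `ℝⁿ`, and let `a, b` be bounded by `C` with every component of `a`, `b`, `M`
and `a bᵀ` admitting a Stein solution w.r.t. `p` (regular w.r.t. `q`). Then
`‖(E_q[M] + Cov_q(a,b)) − (E_p[M] + Cov_p(a,b))‖_F
  ≤ (κ_{ab} + C·κ_b + C·κ_a + κ_M) · √(F(q‖p))`. -/
theorem vages_bias_le_sqrt_fisher {n d m : ℕ}
    (p q : EuclideanSpace ℝ (Fin n) → ℝ)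
    (hp : ContDiff ℝ 1 p) (hppos : ∀ x, 0 < p x) (hpnorm : ∫ x, p x = 1)
    (hqc : ContDiff ℝ 1 q) (hqpos : ∀ x, 0 < q x) (hqnorm : ∫ x, q x = 1)
    (a : EuclideanSpace ℝ (Fin n) → EuclideanSpace ℝ (Fin d))
    (b : EuclideanSpace ℝ (Fin n) → EuclideanSpace ℝ (Fin m))
    (M : EuclideanSpace ℝ (Fin n) → EuclideanSpace ℝ (Fin d × Fin m))
    (C : ℝ) (hCa : ∀ h, ‖a h‖ ≤ C) (hCb : ∀ h, ‖b h‖ ≤ C)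
    (ga : Fin d → EuclideanSpace ℝ (Fin n) → EuclideanSpace ℝ (Fin n))
    (gb : Fin m → EuclideanSpace ℝ (Fin n) → EuclideanSpace ℝ (Fin n))
    (gM gab : Fin d × Fin m → EuclideanSpace ℝ (Fin n) → EuclideanSpace ℝ (Fin n))
    (hga : ∀ i, SteinSolution p q (fun x => a x i) (ga i))
    (hgb : ∀ j, SteinSolution p q (fun x => b x j) (gb j))
    (hgM : ∀ ij, SteinSolution p q (fun x => M x ij) (gM ij))
    (hgab : ∀ ij : Fin d × Fin m, SteinSolution p q (fun x => a x ij.1 * b x ij.2) (gab ij))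
    (hqa : Integrable (fun x => q x • a x)) (hpa : Integrable (fun x => p x • a x))
    (hqb : Integrable (fun x => q x • b x)) (hpb : Integrable (fun x => p x • b x))
    (hqM : Integrable (fun x => q x • M x)) (hpM : Integrable (fun x => p x • M x))
    (hqab : Integrable (fun x => q x • outer (a x) (b x)))
    (hpab : Integrable (fun x => p x • outer (a x) (b x))) :
    (‖((∫ x, q x • M x) +
          ((∫ x, q x • outer (a x) (b x)) - outer (∫ x, q x • a x) (∫ x, q x • b x)))
        - ((∫ x, p x • M x) +
          ((∫ x, p x • outer (a x) (b x)) - outer (∫ x, p x • a x) (∫ x, p x • b x)))‖₊ : ℝ≥0∞)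
      ≤ ENNReal.ofReal
          (Real.sqrt (∑ ij : Fin d × Fin m, ∫ x, q x * ‖gab ij x‖ ^ 2)
            + C * Real.sqrt (∑ j, ∫ x, q x * ‖gb j x‖ ^ 2)
            + C * Real.sqrt (∑ i, ∫ x, q x * ‖ga i x‖ ^ 2)
            + Real.sqrt (∑ ij : Fin d × Fin m, ∫ x, q x * ‖gM ij x‖ ^ 2))
        * (fisherDivL q p) ^ (2⁻¹ : ℝ) :=
  vages_bias_le_sqrt_fisher_general hp hppos hqc hqpos hqnorm
    (fun i => (hga i).l2SteinSolution) (fun j => (hgb j).l2SteinSolution)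
    (fun ij => (hgM ij).l2SteinSolution) (fun ij => (hgab ij).l2SteinSolution)
    hqa hpa hqb hpb hqM hpM hqab hpab
    (norm_integral_smul_le (fun x => (hqpos x).le) hqnorm hCa)
    (norm_integral_smul_le (fun x => (hppos x).le) hpnorm hCb)
end
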